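/- Let G be a group, S and T G-sets, and ρ : ℤ[S] → ℤ[T] a G-equivariant additive homomorphism. Let n ≥ 1 be an integer and suppose y₁, …, y_ℓ ∈ D_n are representatives of the G-orbits of D_n (i.e. every element of D_n equals g • y_k for some g ∈ G and some k). For each k, let A_k = {z ∈ D₁ : y_k ∩_S z = ∅ and y_k ∩_ρ z ≠ ∅}. Then every element of D_{n+1} can be written as g • (y_k + z) for some g ∈ G, some 1 ≤ k ≤ ℓ, and some z ∈ A_k; moreover each such y_k + z belongs to D_{n+1}. -/

import Mathlib

open Finsupp

/-- Action of `g : G` on the permutation module `ℤ[S]`, permuting the basis. -/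
def gact {G S : Type*} [Group G] [MulAction G S] (g : G) (x : S →₀ ℤ) : S →₀ ℤ :=
  Finsupp.equivMapDomain (MulAction.toPerm g) x

/-- The ℓ1-norm on `ℤ[S]`. -/
def l1 {S : Type*} (x : S →₀ ℤ) : ℕ := x.support.sum fun s => (x s).natAbs

/-- `x` is a part of `y`, written `x ⪯_S y`. -/
def IsPart {S : Type*} (x y : S →₀ ℤ) : Prop := ∀ s, x s ^ 2 ≤ x s * y s

/-- `x` and `y` have trivial S-intersection. -/
def SIntTrivial {S : Type*} (x y : S →₀ ℤ) : Prop := ∀ s, 0 ≤ x s * y s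

/-- membership in `D₁ = S ∪ (-S) ⊆ ℤ[S]`. -/
def InD1 {S : Type*} (x : S →₀ ℤ) : Prop :=
  ∃ s, x = Finsupp.single s 1 ∨ x = Finsupp.single s (-1)

/-- `x` and `y` have nontrivial ρ-intersection. -/
def RhoInt {S T : Type*} (ρ : (S →₀ ℤ) →+ (T →₀ ℤ)) (x y : S →₀ ℤ) : Prop :=
  ∃ x₁ y₁, InD1 x₁ ∧ InD1 y₁ ∧ IsPart x₁ x ∧ IsPart y₁ y ∧ ∃ t, ρ x₁ t * ρ y₁ t < 0

/-- membership in `D_n`. -/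
def InD {S T : Type*} (ρ : (S →₀ ℤ) →+ (T →₀ ℤ)) (n : ℕ) (x : S →₀ ℤ) : Prop :=
  ∃ c : ℕ → (S →₀ ℤ), (∀ i < n, InD1 (c i)) ∧ x = ∑ i ∈ Finset.range n, c i ∧
    ∀ k, 1 ≤ k → k < n →
      SIntTrivial (∑ i ∈ Finset.range k, c i) (c k) ∧
      RhoInt ρ (∑ i ∈ Finset.range k, c i) (c k)

/-- `x` is ρ-connected. -/
def RhoConnected {S T : Type*} (ρ : (S →₀ ℤ) →+ (T →₀ ℤ)) (x : S →₀ ℤ) : Prop :=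
  ∃ n, 1 ≤ n ∧ InD ρ n x

/-- `ρ` is G-equivariant. -/
def Equivariant (G : Type*) {S T : Type*} [Group G] [MulAction G S] [MulAction G T]
    (ρ : (S →₀ ℤ) →+ (T →₀ ℤ)) : Prop :=
  ∀ (g : G) (x : S →₀ ℤ), ρ (gact g x) = gact g (ρ x)

/-- `S` has finitely many G-orbits. -/
def FinitelyManyOrbits (G S : Type*) [Group G] [MulAction G S] : Prop :=
  ∃ R : Finset S, ∀ s : S, ∃ (g : G) (r : S), r ∈ R ∧ g • r = s

/-- every element of `T` has finite stabilizer. -/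
def FiniteStabilizers (G T : Type*) [Group G] [MulAction G T] : Prop :=
  ∀ t : T, {g : G | g • t = t}.Finite

/-! Forgetting the last summand of an element of `D_{n+1}` leaves an element of `D_n`, which is
`g • y k` for some `g` and `k`. All the notions involved are `G`-invariant, so translating the
forgotten summand by `g⁻¹` puts it into `A_k`. -/

section Action

variable {G S : Type*} [Group G] [MulAction G S]

theorem gact_apply (g : G) (x : S →₀ ℤ) (s : S) : gact g x s = x (g⁻¹ • s) := rfl

theorem gact_single (g : G) (s : S) (a : ℤ) : gact g (single s a) = single (g • s) a :=
  equivMapDomain_single _ s a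

theorem gact_add (g : G) (x y : S →₀ ℤ) : gact g (x + y) = gact g x + gact g y :=
  map_add (Finsupp.domCongr (MulAction.toPerm g)) x y

theorem gact_inv_gact (g : G) (x : S →₀ ℤ) : gact g⁻¹ (gact g x) = x := by
  ext s
  rw [gact_apply, gact_apply, smul_inv_smul]

theorem gact_surjective (g : G) : Function.Surjective (gact g : (S →₀ ℤ) → (S →₀ ℤ)) :=
  (Finsupp.domCongr (MulAction.toPerm g)).surjective

theorem InD1.map_gact {x : S →₀ ℤ} (h : InD1 x) (g : G) : InD1 (gact g x) := by
  obtain ⟨s, rfl | rfl⟩ := h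
  · exact ⟨g • s, .inl (gact_single g s 1)⟩
  · exact ⟨g • s, .inr (gact_single g s (-1))⟩

theorem IsPart.map_gact {x y : S →₀ ℤ} (h : IsPart x y) (g : G) :
    IsPart (gact g x) (gact g y) :=
  fun s => h (g⁻¹ • s)

theorem SIntTrivial.map_gact {x y : S →₀ ℤ} (h : SIntTrivial x y) (g : G) :
    SIntTrivial (gact g x) (gact g y) :=
  fun s => h (g⁻¹ • s)

theorem RhoInt.map_gact {T : Type*} [MulAction G T] {ρ : (S →₀ ℤ) →+ (T →₀ ℤ)}
    (hρ : Equivariant G ρ) {x y : S →₀ ℤ} (h : RhoInt ρ x y) (g : G) :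
    RhoInt ρ (gact g x) (gact g y) := by
  obtain ⟨x₁, y₁, hx₁, hy₁, hx, hy, t, ht⟩ := h
  refine ⟨gact g x₁, gact g y₁, hx₁.map_gact g, hy₁.map_gact g, hx.map_gact g, hy.map_gact g,
    g • t, ?_⟩
  rwa [hρ, hρ, gact_apply, gact_apply, inv_smul_smul]

end Action

/-- Membership of `z` in the set of admissible next summands after `y`: for `y = y k` this is
the set `A_k`. -/
structure IsAttachable {S T : Type*} (ρ : (S →₀ ℤ) →+ (T →₀ ℤ)) (y z : S →₀ ℤ) : Prop where
  inD1 : InD1 z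
  sIntTrivial : SIntTrivial y z
  rhoInt : RhoInt ρ y z

section Attachable

variable {S T : Type*} {ρ : (S →₀ ℤ) →+ (T →₀ ℤ)}

theorem IsAttachable.map_gact {G : Type*} [Group G] [MulAction G S] [MulAction G T]
    (hρ : Equivariant G ρ) {y z : S →₀ ℤ} (h : IsAttachable ρ y z) (g : G) :
    IsAttachable ρ (gact g y) (gact g z) :=
  ⟨h.inD1.map_gact g, h.sIntTrivial.map_gact g, h.rhoInt.map_gact hρ g⟩

theorem isAttachable_gact_iff {G : Type*} [Group G] [MulAction G S] [MulAction G T]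
    (hρ : Equivariant G ρ) (g : G) {y z : S →₀ ℤ} :
    IsAttachable ρ (gact g y) (gact g z) ↔ IsAttachable ρ y z :=
  ⟨fun h => by simpa only [gact_inv_gact] using h.map_gact hρ g⁻¹, fun h => h.map_gact hρ g⟩

theorem InD.exists_eq_add {n : ℕ} (hn : 1 ≤ n) {x : S →₀ ℤ} (hx : InD ρ (n + 1) x) :
    ∃ y z, InD ρ n y ∧ IsAttachable ρ y z ∧ x = y + z := by
  obtain ⟨c, hc, rfl, hstep⟩ := hx
  obtain ⟨hS, hR⟩ := hstep n hn n.lt_succ_self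
  exact ⟨∑ i ∈ Finset.range n, c i, c n,
    ⟨c, fun i hi => hc i (by lia), rfl, fun k hk hkn => hstep k hk (by lia)⟩,
    ⟨hc n n.lt_succ_self, hS, hR⟩, Finset.sum_range_succ c n⟩

theorem InD.add {n : ℕ} {y z : S →₀ ℤ} (hy : InD ρ n y) (hz : IsAttachable ρ y z) :
    InD ρ (n + 1) (y + z) := by
  obtain ⟨c, hc, rfl, hstep⟩ := hy
  have sum_update {k : ℕ} (hk : k ≤ n) :
      ∑ i ∈ Finset.range k, Function.update c n z i = ∑ i ∈ Finset.range k, c i :=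
    Finset.sum_update_of_notMem (by simpa using hk) c z
  refine ⟨Function.update c n z, fun i hi => ?_, ?_, fun k hk hkn => ?_⟩
  · obtain hi | rfl := Nat.lt_succ_iff_lt_or_eq.mp hi
    · simpa only [Function.update_of_ne hi.ne] using hc i hi
    · simpa only [Function.update_self] using hz.inD1
  · rw [Finset.sum_range_succ, sum_update le_rfl, Function.update_self]
  · rw [sum_update (Nat.le_of_lt_succ hkn)]
    obtain hkn | rfl := Nat.lt_succ_iff_lt_or_eq.mp hkn
    · simpa only [Function.update_of_ne hkn.ne] using hstep k hk hkn
    · simpa only [Function.update_self] using ⟨hz.sIntTrivial, hz.rhoInt⟩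

end Attachable

theorem stmt_12_general {G S T ι : Type*} [Group G] [MulAction G S] [MulAction G T]
    (ρ : (S →₀ ℤ) →+ (T →₀ ℤ)) (hρ : Equivariant G ρ)
    (n : ℕ) (hn : 1 ≤ n) (y : ι → (S →₀ ℤ)) (hy : ∀ k, InD ρ n (y k))
    (hrep : ∀ x : S →₀ ℤ, InD ρ n x → ∃ (g : G) (k : ι), x = gact g (y k)) :
    (∀ x : S →₀ ℤ, InD ρ (n + 1) x →
      ∃ (g : G) (k : ι) (z : S →₀ ℤ),
        InD1 z ∧ SIntTrivial (y k) z ∧ RhoInt ρ (y k) z ∧ x = gact g (y k + z)) ∧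
    (∀ (k : ι) (z : S →₀ ℤ), InD1 z → SIntTrivial (y k) z → RhoInt ρ (y k) z →
      InD ρ (n + 1) (y k + z)) := by
  refine ⟨fun x hx => ?_, fun k z hz hS hR => (hy k).add ⟨hz, hS, hR⟩⟩
  obtain ⟨x', w, hx', hw, rfl⟩ := hx.exists_eq_add hn
  obtain ⟨g, k, rfl⟩ := hrep x' hx'
  obtain ⟨z, rfl⟩ := gact_surjective g w
  obtain ⟨hz, hS, hR⟩ := (isAttachable_gact_iff hρ g).mp hw
  exact ⟨g, k, z, hz, hS, hR, (gact_add g (y k) z).symm⟩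

/-- Inductive step in the proof that `D_n` has finitely many orbits: orbit
representatives for `D_{n+1}` from orbit representatives for `D_n`. -/
theorem stmt_12 {G S T : Type*} [Group G] [MulAction G S] [MulAction G T]
    (ρ : (S →₀ ℤ) →+ (T →₀ ℤ)) (hρ : Equivariant G ρ)
    (n : ℕ) (hn : 1 ≤ n) (ℓ : ℕ) (y : Fin ℓ → (S →₀ ℤ))
    (hy : ∀ k, InD ρ n (y k))
    (hrep : ∀ x : S →₀ ℤ, InD ρ n x → ∃ (g : G) (k : Fin ℓ), x = gact g (y k)) :
    (∀ x : S →₀ ℤ, InD ρ (n + 1) x →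
      ∃ (g : G) (k : Fin ℓ) (z : S →₀ ℤ),
        InD1 z ∧ SIntTrivial (y k) z ∧ RhoInt ρ (y k) z ∧ x = gact g (y k + z)) ∧
    (∀ (k : Fin ℓ) (z : S →₀ ℤ), InD1 z → SIntTrivial (y k) z → RhoInt ρ (y k) z →
      InD ρ (n + 1) (y k + z)) :=
  stmt_12_general ρ hρ n hn y hy hrep
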